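/- There exists an absolute constant C > 0 such that the following holds. Let (Ω, μ) be a probability space and (φ_j)_{j=1}^n an orthonormal system in L₂(Ω, μ) (complex-valued) with ‖φ_j‖_{L∞} ≤ L for all 1 ≤ j ≤ n. For every p ∈ (1, 2) and every integer k with 2 ≤ k < n there exists a subset I ⊆ {1, …, n} with |I| ≥ n − k such that for every a = (a_i) ∈ ℂⁿ, ‖∑_{i ∈ I} a_i φ_i‖_{L₂} ≤ (C/(p−1)^{5/2}) · L · √(n/k) · √(log k) · ‖∑_{i ∈ I} a_i φ_i‖_{L_p}. -/

import Mathlib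

open MeasureTheory

lemma s10_scal {p : ℝ} (hp : 1 < p) (hp2 : p < 2) {x : ℝ} (hx0 : 0 ≤ x) (hx1 : x ≤ 1) :
    2 + p * (p - 1) / 2 * x ^ 2 ≤ (1 + x) ^ p + (1 - x) ^ p := by
  set g : ℝ → ℝ := fun x => (1 + x) ^ p + (1 - x) ^ p - p * (p - 1) / 2 * x ^ 2 with hg
  have hder : ∀ y ∈ Set.Ioo (0:ℝ) 1, HasDerivAt g
      (p * (1 + y) ^ (p - 1) - p * (1 - y) ^ (p - 1) - p * (p - 1) * y) y := by
    intro y hy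
    have h1 : HasDerivAt (fun x : ℝ => 1 + x) 1 y := by
      simpa using (hasDerivAt_id y).const_add 1
    have h2 : HasDerivAt (fun x : ℝ => 1 - x) (-1) y := by
      simpa using (hasDerivAt_id y).const_sub 1
    have h1' := h1.rpow_const (p := p) (Or.inr hp.le)
    have h2' := h2.rpow_const (p := p) (Or.inr hp.le)
    have h3 : HasDerivAt (fun x : ℝ => p * (p - 1) / 2 * x ^ 2) (p * (p - 1) / 2 * (2 * y)) y := by
      simpa using (hasDerivAt_pow 2 y).const_mul (p * (p - 1) / 2)
    have := (h1'.add h2').sub h3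
    have e : p * (1 + y) ^ (p - 1) - p * (1 - y) ^ (p - 1) - p * (p - 1) * y =
      1 * p * (1 + y) ^ (p - 1) + -1 * p * (1 - y) ^ (p - 1) - p * (p - 1) / 2 * (2 * y) := by ring
    rw [e]
    exact this
  have hmono : MonotoneOn g (Set.Icc 0 1) := by
    apply monotoneOn_of_deriv_nonneg (convex_Icc 0 1)
    · apply ContinuousOn.sub
      · apply ContinuousOn.add
        · exact ContinuousOn.rpow_const (by fun_prop) (fun _ _ => Or.inr (by linarith))
        · exact ContinuousOn.rpow_const (by fun_prop) (fun _ _ => Or.inr (by linarith))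
      · fun_prop
    · intro y hy
      rw [interior_Icc] at hy
      exact (hder y hy).differentiableAt.differentiableWithinAt
    · intro y hy
      rw [interior_Icc] at hy
      rw [(hder y hy).deriv]
      have e1 : (1:ℝ) ≤ (1 + y) ^ (p - 1) := Real.one_le_rpow (by linarith [hy.1]) (by linarith)
      have e2 : (1 + (-y)) ^ (p - 1) ≤ 1 + (p - 1) * (-y) :=
        rpow_one_add_le_one_add_mul_self (by linarith [hy.2]) (by linarith) (by linarith)
      have e3 : (1 + (-y)) = 1 - y := by ring
      rw [e3] at e2
      have : 0 ≤ p * ((1 + y) ^ (p - 1) - (1 - y) ^ (p - 1) - (p - 1) * y) := by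
        apply mul_nonneg (by linarith)
        linarith
      linarith
  have := hmono (Set.left_mem_Icc.2 zero_le_one) ⟨hx0, hx1⟩ hx0
  simp only [hg] at this
  norm_num at this
  linarith

lemma s10_real {p : ℝ} (hp : 1 < p) (hp2 : p < 2) {a b : ℝ} (ha : 0 ≤ a) (hb : 0 ≤ b)
    (hm : 0 < (a + b) / 2) :
    ((a + b) / 2) ^ p + p * (p - 1) / 16 * (a - b) ^ 2 * ((a + b) / 2) ^ (p - 2)
      ≤ (a ^ p + b ^ p) / 2 := by
  wlog hab : b ≤ a generalizing a b
  · have := this hb ha (by linarith) (by linarith)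
    rw [add_comm b a, add_comm (b ^ p)] at this
    have e : (b - a) ^ 2 = (a - b) ^ 2 := by ring
    rwa [e] at this
  set m := (a + b) / 2 with hmd
  set x := (a - b) / (2 * m) with hx
  have hx0 : 0 ≤ x := by apply div_nonneg <;> linarith
  have hx1 : x ≤ 1 := by rw [hx, div_le_one (by linarith)]; linarith
  have hxm : 2 * m * x = a - b := by rw [hx]; field_simp
  have ea : a = m * (1 + x) := by linarith
  have eb : b = m * (1 - x) := by linarith
  have h := s10_scal hp hp2 hx0 hx1
  have e1 : a ^ p = m ^ p * (1 + x) ^ p := by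
    rw [ea, Real.mul_rpow hm.le (by linarith)]
  have e2 : b ^ p = m ^ p * (1 - x) ^ p := by
    rw [eb, Real.mul_rpow hm.le (by linarith)]
  have e3 : m ^ p = m ^ (p - 2) * m ^ 2 := by
    rw [← Real.rpow_natCast m 2, ← Real.rpow_add hm]; norm_num
  have hpos : 0 ≤ m ^ p := Real.rpow_nonneg hm.le p
  rw [e1, e2, ← hxm]
  have h4 := mul_le_mul_of_nonneg_left h hpos
  have e5 : p * (p - 1) / 16 * (2 * m * x) ^ 2 * m ^ (p - 2) = p * (p - 1) / 4 * x ^ 2 * m ^ p := by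
    rw [e3]; ring
  rw [e5]
  nlinarith

lemma s10_cplx {p : ℝ} (hp : 1 < p) (hp2 : p < 2) (z w : ℂ) (hm : 0 < (‖z‖ + ‖w‖) / 2) :
    ‖(z + w) / 2‖ ^ p + (p - 1) / 16 * (‖z - w‖ ^ 2 * ((‖z‖ + ‖w‖) / 2) ^ (p - 2))
      ≤ (‖z‖ ^ p + ‖w‖ ^ p) / 2 := by
  have h := s10_real hp hp2 (norm_nonneg z) (norm_nonneg w) hm
  set a := ‖z‖
  set b := ‖w‖
  set m := (a + b) / 2 with hmd
  set N := ‖(z + w) / 2‖ with hN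
  have hpar : ‖z + w‖ ^ 2 + ‖z - w‖ ^ 2 = 2 * (a ^ 2 + b ^ 2) := by
    have := parallelogram_law_with_norm ℝ z w
    exact this
  have hN2 : 4 * N ^ 2 = ‖z + w‖ ^ 2 := by
    rw [hN, norm_div]; norm_num; ring
  have hNm : N ≤ m := by
    have := norm_add_le z w
    rw [hN, norm_div]; norm_num; rw [hmd]; linarith
  have hN0 : 0 ≤ N := norm_nonneg _
  set s := (N / m) ^ 2 - 1 with hs
  have hs1 : -1 ≤ s := by have := sq_nonneg (N / m); linarith
  have hB := rpow_one_add_le_one_add_mul_self hs1 (p := p / 2) (by linarith) (by linarith)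
  have e1 : (1 + s) ^ (p / 2) = N ^ p / m ^ p := by
    have : 1 + s = (N / m) ^ 2 := by rw [hs]; ring
    rw [this, ← Real.rpow_natCast, ← Real.rpow_mul (by positivity), ← Real.div_rpow hN0 hm.le]
    congr 1; push_cast; ring
  have hmp : 0 < m ^ p := Real.rpow_pos_of_pos hm p
  have hmp2 : 0 < m ^ (p - 2) := Real.rpow_pos_of_pos hm _
  have e3 : m ^ p = m ^ (p - 2) * m ^ 2 := by
    rw [← Real.rpow_natCast m 2, ← Real.rpow_add hm]; norm_num
  rw [e1, div_le_iff₀ hmp] at hB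
  have e4 : m ^ p * s = m ^ (p - 2) * (N ^ 2 - m ^ 2) := by
    rw [e3, hs]; field_simp
  have hB' : N ^ p ≤ m ^ p + p / 2 * (m ^ (p - 2) * (N ^ 2 - m ^ 2)) := by
    rw [← e4]; linarith
  have key : N ^ 2 - m ^ 2 = -(‖z - w‖ ^ 2 - (a - b) ^ 2) / 4 := by
    rw [hmd]; nlinarith
  rw [key] at hB'
  have hd : 0 ≤ ‖z - w‖ ^ 2 - (a - b) ^ 2 := by
    have h1 := abs_norm_sub_norm_le z w
    have : (a - b) ^ 2 ≤ ‖z - w‖ ^ 2 := by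
      rw [← sq_abs (a - b)]; gcongr
    linarith
  have h5 : 0 ≤ m ^ (p - 2) * (‖z - w‖ ^ 2 - (a - b) ^ 2) := by positivity
  have h6 : 0 ≤ m ^ (p - 2) * (a - b) ^ 2 := by positivity
  nlinarith [mul_nonneg (by linarith : (0:ℝ) ≤ p - 1) h5, mul_nonneg (by nlinarith : (0:ℝ) ≤ (p - 1)*(p-1)) h6]

lemma s10_pw {p : ℝ} (hp : 1 < p) (hp2 : p < 2) (z w : ℂ) (l : ℝ) :
    ‖(z + w) / 2‖ ^ p + (p - 1) / 16 * (2 * l * ‖z - w‖ - l ^ 2 * (1 + ‖z‖ ^ p + ‖w‖ ^ p))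
      ≤ (‖z‖ ^ p + ‖w‖ ^ p) / 2 := by
  have hz := norm_nonneg z
  have hw := norm_nonneg w
  have hzp : 0 ≤ ‖z‖ ^ p := by positivity
  have hwp : 0 ≤ ‖w‖ ^ p := by positivity
  rcases (by positivity : 0 ≤ (‖z‖ + ‖w‖) / 2).eq_or_lt with h0 | hm
  · have z0 : z = 0 := norm_eq_zero.1 (by linarith)
    have w0 : w = 0 := norm_eq_zero.1 (by linarith)
    subst z0 w0
    have : (0:ℝ) ^ p = 0 := Real.zero_rpow (by linarith)
    simp [this]
    have := mul_nonneg (by linarith : (0:ℝ) ≤ (p - 1) / 16) (sq_nonneg l)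
    linarith
  · have h := s10_cplx hp hp2 z w hm
    set m := (‖z‖ + ‖w‖) / 2 with hmd
    set d := ‖z - w‖
    have hA : 0 < m ^ (p - 2) := Real.rpow_pos_of_pos hm _
    have hAinv : m ^ (2 - p) * m ^ (p - 2) = 1 := by
      rw [← Real.rpow_add hm]; norm_num
    have hBpos : 0 < m ^ (2 - p) := Real.rpow_pos_of_pos hm _
    have h1 : m ^ (2 - p) ≤ 1 + ‖z‖ ^ p + ‖w‖ ^ p := by
      rcases le_total m 1 with h | h
      · have := Real.rpow_le_one hm.le h (by linarith : 0 ≤ 2 - p)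
        linarith
      · have h2 : m ^ (2 - p) ≤ m ^ p := Real.rpow_le_rpow_of_exponent_le h (by linarith)
        have h3 : m ^ p ≤ ‖z‖ ^ p + ‖w‖ ^ p := by
          rcases le_total ‖z‖ ‖w‖ with h' | h'
          · have := Real.rpow_le_rpow hm.le (by linarith : m ≤ ‖w‖) (by linarith : 0 ≤ p)
            linarith
          · have := Real.rpow_le_rpow hm.le (by linarith : m ≤ ‖z‖) (by linarith : 0 ≤ p)
            linarith
        linarith
    have h2 : 2 * l * d ≤ d ^ 2 * m ^ (p - 2) + l ^ 2 * m ^ (2 - p) := by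
      have : 0 ≤ m ^ (2 - p) * (d * m ^ (p - 2) - l) ^ 2 := by positivity
      have e : m ^ (2 - p) * (d * m ^ (p - 2) - l) ^ 2 =
        (m ^ (2 - p) * m ^ (p - 2)) * (d ^ 2 * m ^ (p - 2)) - (m ^ (2 - p) * m ^ (p - 2)) * (2 * l * d)
         + l ^ 2 * m ^ (2 - p) := by ring
      rw [e, hAinv] at this
      linarith
    have h3 := mul_le_mul_of_nonneg_left h1 (sq_nonneg l)
    have h4 : 2 * l * d - l ^ 2 * (1 + ‖z‖ ^ p + ‖w‖ ^ p) ≤ d ^ 2 * m ^ (p - 2) := by linarith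
    have h5 := mul_le_mul_of_nonneg_left h4 (by linarith : (0:ℝ) ≤ (p - 1) / 16)
    linarith

/-- approximate minimizer of `F` on `C` -/
noncomputable def s10pick {V : Type*} [Zero V] (F : V → ℝ) (ε : ℝ) (C : Set V) : V :=
  open Classical in
  if h : ∃ g ∈ C, ∀ x ∈ C, F g ≤ F x + ε then h.choose else 0

lemma s10pick_spec {V : Type*} [Zero V] (F : V → ℝ) (hF : ∀ x, 0 ≤ F x) {ε : ℝ} (hε : 0 < ε)
    (C : Set V) (hC : C.Nonempty) :
    s10pick F ε C ∈ C ∧ ∀ x ∈ C, F (s10pick F ε C) ≤ F x + ε := by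
  have h : ∃ g ∈ C, ∀ x ∈ C, F g ≤ F x + ε := by
    have hne : (F '' C).Nonempty := hC.image F
    have hb : BddBelow (F '' C) := ⟨0, by rintro _ ⟨x, _, rfl⟩; exact hF x⟩
    obtain ⟨_, ⟨g, hg, rfl⟩, hlt⟩ := exists_lt_of_csInf_lt hne (lt_add_of_pos_right (sInf (F '' C)) hε)
    refine ⟨g, hg, fun x hx => ?_⟩
    have := csInf_le hb ⟨x, hx, rfl⟩
    linarith
  unfold s10pick
  rw [dif_pos h]
  exact h.choose_spec

/-- state of the greedy process after a list of symbols -/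
noncomputable def s10st {V ι : Type*} [Zero V] (F : V → ℝ) (c : ι → V → ℂ) (l : ℕ) (ε : ℝ) :
    List (ι × Fin 4 × Fin l) → Set V × V
  | [] => ({x | F x ≤ 1}, s10pick F ε {x | F x ≤ 1})
  | (σ :: D) =>
      ((s10st F c l ε D).1 ∩ {x | (Complex.I ^ (σ.2.1 : ℕ) * c σ.1 (s10st F c l ε D).2).re
          + (1 / 2) ^ (σ.2.2 : ℕ) / 2 ≤ (Complex.I ^ (σ.2.1 : ℕ) * c σ.1 x).re},
        s10pick F ε ((s10st F c l ε D).1 ∩ {x | (Complex.I ^ (σ.2.1 : ℕ) * c σ.1 (s10st F c l ε D).2).re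
          + (1 / 2) ^ (σ.2.2 : ℕ) / 2 ≤ (Complex.I ^ (σ.2.1 : ℕ) * c σ.1 x).re}))

lemma s10_dir (w : ℂ) (t : ℝ) (h : t < ‖w‖) : ∃ m : Fin 4, t / 2 ≤ (Complex.I ^ (m : ℕ) * w).re := by
  have h1 := Complex.norm_le_abs_re_add_abs_im w
  by_contra! hcon
  have c0 := hcon 0
  have c1 := hcon 1
  have c2 := hcon 2
  have c3 := hcon 3
  have e3 : Complex.I ^ 3 = -Complex.I := by rw [pow_succ, Complex.I_sq]; simp
  simp [e3] at c0 c1 c2 c3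
  have : |w.re| < t / 2 := abs_lt.2 ⟨by linarith, by linarith⟩
  have : |w.im| < t / 2 := abs_lt.2 ⟨by linarith, by linarith⟩
  linarith

section
variable {V ι : Type*} [AddCommGroup V] [Module ℝ V] (F : V → ℝ) (c : ι → V →ₗ[ℝ] ℂ) (l : ℕ) (ε : ℝ)

/-- weight of a list -/
noncomputable def s10w {ι : Type*} {l : ℕ} (D : List (ι × Fin 4 × Fin l)) : ℝ :=
  (D.map (fun σ => ((1 / 4 : ℝ)) ^ (σ.2.2 : ℕ))).sum

lemma s10st_snd (D : List (ι × Fin 4 × Fin l)) :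
    (s10st F (fun i => ⇑(c i)) l ε D).2 = s10pick F ε (s10st F (fun i => ⇑(c i)) l ε D).1 := by
  cases D <;> rfl

lemma s10st_sub (D : List (ι × Fin 4 × Fin l)) :
    (s10st F (fun i => ⇑(c i)) l ε D).1 ⊆ {x | F x ≤ 1} := by
  induction D with
  | nil => exact subset_rfl
  | cons σ D ih => exact Set.inter_subset_left.trans ih

lemma s10st_mid
    (hconv : ∀ x y, F x ≤ 1 → F y ≤ 1 → F ((1 / 2 : ℝ) • (x + y)) ≤ (F x + F y) / 2)
    (D : List (ι × Fin 4 × Fin l)) :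
    ∀ x ∈ (s10st F (fun i => ⇑(c i)) l ε D).1, ∀ y ∈ (s10st F (fun i => ⇑(c i)) l ε D).1,
      (1 / 2 : ℝ) • (x + y) ∈ (s10st F (fun i => ⇑(c i)) l ε D).1 := by
  induction D with
  | nil =>
    intro x hx y hy
    have hx' : F x ≤ 1 := hx
    have hy' : F y ≤ 1 := hy
    have := hconv x y hx hy
    change F _ ≤ 1
    linarith
  | cons σ D ih =>
    rintro x ⟨hx, hx'⟩ y ⟨hy, hy'⟩
    refine ⟨ih x hx y hy, ?_⟩
    simp only [Set.mem_ofPred_eq] at hx' hy' ⊢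
    have e : (Complex.I ^ (σ.2.1 : ℕ) * c σ.1 ((1 / 2 : ℝ) • (x + y))).re =
        ((Complex.I ^ (σ.2.1 : ℕ) * c σ.1 x).re + (Complex.I ^ (σ.2.1 : ℕ) * c σ.1 y).re) / 2 := by
      rw [map_smul, map_add, mul_smul_comm, Complex.smul_re, mul_add, Complex.add_re, smul_eq_mul]
      ring
    rw [e]
    linarith

/-- invariant of the process -/
def s10Inv (f : V) (D : List (ι × Fin 4 × Fin l)) : Prop :=
  f ∈ (s10st F (fun i => ⇑(c i)) l ε D).1 ∧ s10w D / 4 ≤ F (s10st F (fun i => ⇑(c i)) l ε D).2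

lemma s10Inv_le (hF : ∀ x, 0 ≤ F x)
    (hε : 0 < ε)
    (f : V) (D : List (ι × Fin 4 × Fin l)) (h : s10Inv F c l ε f D) : s10w D ≤ 4 := by
  have h1 := (s10pick_spec F hF hε _ ⟨f, h.1⟩).1
  rw [← s10st_snd] at h1
  have h2 : F _ ≤ 1 := s10st_sub F c l ε D h1
  have := h.2
  linarith

lemma s10_step (hF : ∀ x, 0 ≤ F x)
    (hconv : ∀ x y, F x ≤ 1 → F y ≤ 1 → ∀ i,
      F ((1 / 2 : ℝ) • (x + y)) + ‖c i x - c i y‖ ^ 2 ≤ (F x + F y) / 2)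
    (hε : 0 < ε)
    (hε2 : ∀ j : Fin l, ε ≤ (1 / 4) ^ (j : ℕ) / 8)
    (f : V) (D : List (ι × Fin 4 × Fin l)) (h : s10Inv F c l ε f D) (j : Fin l) (i : ι)
    (hi : (1 / 2) ^ (j : ℕ) < ‖c i f - c i (s10st F (fun i => ⇑(c i)) l ε D).2‖) :
    ∃ m : Fin 4, s10Inv F c l ε f ((i, m, j) :: D) := by
  obtain ⟨m, hm⟩ := s10_dir _ _ hi
  refine ⟨m, ?_⟩
  have hf : f ∈ (s10st F (fun i => ⇑(c i)) l ε ((i, m, j) :: D)).1 := by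
    refine ⟨h.1, ?_⟩
    simp only [Set.mem_ofPred_eq]
    rw [mul_sub, Complex.sub_re] at hm
    linarith
  refine ⟨hf, ?_⟩
  obtain ⟨g1, g2⟩ := s10pick_spec F hF hε _ ⟨f, h.1⟩
  rw [← s10st_snd] at g1 g2
  obtain ⟨k1, k2⟩ := s10pick_spec F hF hε _ ⟨f, hf⟩
  rw [← s10st_snd] at k1
  set g := (s10st F (fun i => ⇑(c i)) l ε D).2 with hg
  set g' := (s10st F (fun i => ⇑(c i)) l ε ((i, m, j) :: D)).2 with hg'
  have hk1 : g' ∈ (s10st F (fun i => ⇑(c i)) l ε D).1 := k1.1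
  have hk2 := k1.2
  simp only [Set.mem_ofPred_eq] at hk2
  rw [← hg] at hk2
  have hgle : F g ≤ 1 := s10st_sub F c l ε D g1
  have hgle' : F g' ≤ 1 := s10st_sub F c l ε D hk1
  by_cases hne : True
  swap
  · exact absurd trivial hne
  have hmid := s10st_mid F c l ε (fun x y hx hy => by
    have := hconv x y hx hy i
    have := sq_nonneg ‖c i x - c i y‖
    linarith) D g g1 g' hk1
  have hA := g2 _ hmid
  have hB := hconv g g' hgle hgle' i
  have hnorm : (1 / 2 : ℝ) ^ (j : ℕ) / 2 ≤ ‖c i g - c i g'‖ := by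
    rw [norm_sub_rev]
    calc (1 / 2 : ℝ) ^ (j : ℕ) / 2 ≤ (Complex.I ^ (m : ℕ) * (c i g' - c i g)).re := by
          rw [mul_sub, Complex.sub_re]; linarith
      _ ≤ ‖Complex.I ^ (m : ℕ) * (c i g' - c i g)‖ := Complex.re_le_norm _
      _ = _ := by simp
  have hsq : ((1 / 2 : ℝ) ^ (j : ℕ) / 2) ^ 2 ≤ ‖c i g - c i g'‖ ^ 2 := by gcongr
  have e4 : ((1 / 2 : ℝ) ^ (j : ℕ) / 2) ^ 2 = (1 / 4) ^ (j : ℕ) / 4 := by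
    rw [div_pow, ← pow_mul, mul_comm, pow_mul]; norm_num
  rw [e4] at hsq
  have hw : s10w ((i, m, j) :: D) = (1 / 4) ^ (j : ℕ) + s10w D := by simp [s10w]
  rw [hw]
  have := h.2
  have := hε2 j
  linarith

lemma s10_scale (hF : ∀ x, 0 ≤ F x)
    (hconv : ∀ x y, F x ≤ 1 → F y ≤ 1 → ∀ i,
      F ((1 / 2 : ℝ) • (x + y)) + ‖c i x - c i y‖ ^ 2 ≤ (F x + F y) / 2)
    (hε : 0 < ε)
    (hε2 : ∀ j : Fin l, ε ≤ (1 / 4) ^ (j : ℕ) / 8)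
    (f : V) (j : Fin l) (N : ℕ) : ∀ (D : List (ι × Fin 4 × Fin l)),
    s10Inv F c l ε f D → 4 - s10w D < N * (1 / 4) ^ (j : ℕ) →
    ∃ D', s10Inv F c l ε f D' ∧ D.length ≤ D'.length ∧
      s10w D' = s10w D + ((D'.length : ℝ) - D.length) * (1 / 4) ^ (j : ℕ) ∧
      ∀ i, ‖c i f - c i (s10st F (fun i => ⇑(c i)) l ε D').2‖ ≤ (1 / 2) ^ (j : ℕ) := by
  induction N with
  | zero =>
    intro D h hlt
    have := s10Inv_le F c l ε hF hε f D h
    simp at hlt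
    linarith
  | succ N ih =>
    intro D h hlt
    by_cases hi : ∃ i, (1 / 2) ^ (j : ℕ) < ‖c i f - c i (s10st F (fun i => ⇑(c i)) l ε D).2‖
    · obtain ⟨i, hi⟩ := hi
      obtain ⟨m, hm⟩ := s10_step F c l ε hF hconv hε hε2 f D h j i hi
      have hw : s10w ((i, m, j) :: D) = (1 / 4) ^ (j : ℕ) + s10w D := by simp [s10w]
      obtain ⟨D', h1, h2, h3, h4⟩ := ih _ hm (by rw [hw]; push_cast at hlt; linarith)
      rw [List.length_cons] at h2
      refine ⟨D', h1, by omega, ?_, h4⟩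
      rw [h3, hw, List.length_cons]
      push_cast
      ring
    · push Not at hi
      exact ⟨D, h, le_rfl, by simp, hi⟩

lemma s10_process (hF : ∀ x, 0 ≤ F x)
    (hconv : ∀ x y, F x ≤ 1 → F y ≤ 1 → ∀ i,
      F ((1 / 2 : ℝ) • (x + y)) + ‖c i x - c i y‖ ^ 2 ≤ (F x + F y) / 2)
    (hε : 0 < ε)
    (hε2 : ∀ j : Fin l, ε ≤ (1 / 4) ^ (j : ℕ) / 8)
    (f : V) (hf : F f ≤ 1) (J : ℕ) (hJ : J ≤ l) :
    ∃ D : ℕ → List (ι × Fin 4 × Fin l),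
      (∀ j < J, ∀ i, ‖c i f - c i (s10st F (fun i => ⇑(c i)) l ε (D j)).2‖ ≤ (1 / 2) ^ j) ∧
      s10Inv F c l ε f (D J) ∧
      ∑ s ∈ Finset.range J, (1 / 4 : ℝ) ^ s * (D s).length + (4 / 3) * (1 / 4) ^ J * (D J).length
        ≤ (4 / 3) * s10w (D J) := by
  induction J with
  | zero =>
    refine ⟨fun _ => [], by simp, ⟨hf, ?_⟩, by simp [s10w]⟩
    simp [s10w, hF]
  | succ J ih =>
    obtain ⟨D, h1, h2, h3⟩ := ih (by omega)
    obtain ⟨N, hN⟩ := exists_nat_gt ((4 - s10w (D J)) / (1 / 4) ^ J)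
    rw [div_lt_iff₀ (by positivity)] at hN
    obtain ⟨D', g1, g2, g3, g4⟩ := s10_scale F c l ε hF hconv hε hε2 f ⟨J, by omega⟩ N (D J) h2 hN
    simp only at g3 g4
    refine ⟨fun j => if j < J then D j else D', ?_, ?_, ?_⟩
    · intro j hj
      by_cases hjJ : j < J
      · simp only [hjJ, if_true]; exact h1 j hjJ
      · obtain rfl : j = J := by omega
        simp only [lt_irrefl, if_false]; exact g4
    · simp only [show ¬ (J + 1 < J) by omega, if_false]; exact g1
    · simp only [show ¬ (J + 1 < J) by omega, if_false]
      rw [Finset.sum_range_succ]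
      have : ∑ s ∈ Finset.range J, (1 / 4 : ℝ) ^ s * (if s < J then D s else D').length
          = ∑ s ∈ Finset.range J, (1 / 4 : ℝ) ^ s * (D s).length := by
        apply Finset.sum_congr rfl
        intro s hs
        rw [if_pos (Finset.mem_range.1 hs)]
      rw [this]
      simp only [lt_irrefl, if_false]
      rw [g3, pow_succ]
      nlinarith
end

lemma s10_count {k : ℕ} (P : Fin k → Bool → Prop) (A : ℕ) (S : Finset (Fin k → Bool))
    (hS : ∀ e ∈ S, (∀ s, ¬ P s (e s)) ∧
      ∃ U : Finset (Fin k), A ≤ U.card ∧ ∀ s ∈ U, P s (!(e s))) :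
    S.card * 2 ^ A ≤ 2 ^ k := by
  classical
  rcases S.eq_empty_or_nonempty with rfl | ⟨e0, he0⟩
  · simp
  obtain ⟨h0, U, hU, hUP⟩ := hS e0 he0
  have hsub : S ⊆ Fintype.piFinset (fun s => if s ∈ U then {e0 s} else Finset.univ) := by
    intro e he
    rw [Fintype.mem_piFinset]
    intro s
    by_cases hs : s ∈ U
    · rw [if_pos hs, Finset.mem_singleton]
      by_contra hne
      have h1 := hUP s hs
      have h2 := (hS e he).1 s
      have : e s = !(e0 s) := by
        cases h3 : e s <;> cases h4 : e0 s <;> simp_all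
      rw [this] at h2
      exact h2 h1
    · rw [if_neg hs]; exact Finset.mem_univ _
  have hc := Finset.card_le_card hsub
  rw [Fintype.card_piFinset] at hc
  have e : ∏ s, (if s ∈ U then ({e0 s} : Finset Bool) else Finset.univ).card
      = 2 ^ (Finset.univ.filter (fun s => s ∉ U)).card := by
    have : ∀ s, (if s ∈ U then ({e0 s} : Finset Bool) else Finset.univ).card
        = if s ∈ U then 1 else 2 := by
      intro s; split_ifs <;> simp
    simp_rw [this]
    rw [Finset.prod_ite]
    simp
  rw [e] at hc
  have hcard : (Finset.univ.filter (fun s => s ∉ U)).card + U.card = k := by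
    have := Finset.card_filter_add_card_filter_not (s := (Finset.univ : Finset (Fin k))) (fun s => s ∈ U)
    simp at this ⊢
    omega
  calc S.card * 2 ^ A ≤ 2 ^ (Finset.univ.filter (fun s => s ∉ U)).card * 2 ^ U.card := by
        gcongr; norm_num
    _ = 2 ^ k := by rw [← pow_add, hcard]

lemma s10_layer (v : ℝ) (hv0 : 0 ≤ v) (hv : v ≤ 4) (l : ℕ) :
    v ^ 2 ≤ 16 * (1 / 4) ^ l +
      ∑ j ∈ Finset.range l, 16 * (1 / 4 : ℝ) ^ j * (if 2 * (1 / 2) ^ j < v then 1 else 0) := by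
  have hnn : ∀ l, 0 ≤ ∑ j ∈ Finset.range l, 16 * (1 / 4 : ℝ) ^ j *
      (if 2 * (1 / 2) ^ j < v then 1 else 0) := by
    intro l
    apply Finset.sum_nonneg
    intro j _
    split_ifs <;> simp
  induction l with
  | zero => simp; nlinarith
  | succ l ih =>
    rw [Finset.sum_range_succ]
    by_cases h : 2 * (1 / 2) ^ l < v
    · rw [if_pos h]
      have : (0:ℝ) ≤ (1 / 4) ^ (l + 1) := by positivity
      linarith
    · rw [if_neg h]
      push Not at h
      have h2 : v ^ 2 ≤ (2 * (1 / 2) ^ l) ^ 2 := by gcongr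
      have e4 : ((1 / 2 : ℝ) ^ l) ^ 2 = (1 / 4) ^ l := by
        rw [← pow_mul, mul_comm, pow_mul]; norm_num
      rw [mul_pow, e4] at h2
      have := hnn l
      have e5 : (1 / 4 : ℝ) ^ (l + 1) = (1 / 4) ^ l * (1 / 4) := pow_succ _ _
      rw [e5]
      linarith

section
variable {V : Type*} [AddCommGroup V] [Module ℝ V] (F : V → ℝ)

lemma s10_norm_le {ι : Type*} (c : ι → V →ₗ[ℝ] ℂ) (hF : ∀ x, 0 ≤ F x) (hF0 : F 0 = 0)
    (hconv : ∀ x y, F x ≤ 1 → F y ≤ 1 → ∀ i,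
      F ((1 / 2 : ℝ) • (x + y)) + ‖c i x - c i y‖ ^ 2 ≤ (F x + F y) / 2)
    (f : V) (hf : F f ≤ 1) (i : ι) : ‖c i f‖ ≤ 1 := by
  have := hconv f 0 hf (by rw [hF0]; norm_num) i
  have h2 := hF ((1 / 2 : ℝ) • (f + 0))
  rw [map_zero, sub_zero, hF0] at this
  have h3 := norm_nonneg (c i f)
  nlinarith

lemma s10_det {k : ℕ} (hk : 2 ≤ k) (a : ℕ) (ha : 1 ≤ a) (c : Fin k × Bool → V →ₗ[ℝ] ℂ)
    (hF : ∀ x, 0 ≤ F x) (hF0 : F 0 = 0)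
    (hconv : ∀ x y, F x ≤ 1 → F y ≤ 1 → ∀ i,
      F ((1 / 2 : ℝ) • (x + y)) + ‖c i x - c i y‖ ^ 2 ≤ (F x + F y) / 2)
    (e : Fin k → Bool) (f : V) (hf : F f ≤ 1) (h0 : ∀ s, c (s, e s) f = 0)
    (hT : 200 * (a : ℝ) < ∑ s, ‖c (s, !(e s)) f‖ ^ 2) :
    ∃ j : Fin k, ∃ D : List ((Fin k × Bool) × Fin 4 × Fin k), D.length < k ∧
      (∀ s, ¬ ((1 / 2) ^ (j : ℕ) <
        ‖c (s, e s) (s10st F (fun i => ⇑(c i)) k ((1 / 4) ^ k / 8) D).2‖)) ∧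
      ∃ U : Finset (Fin k), a * (D.length + 1) ≤ U.card ∧ ∀ s ∈ U, (1 / 2) ^ (j : ℕ) <
        ‖c (s, !(e s)) (s10st F (fun i => ⇑(c i)) k ((1 / 4) ^ k / 8) D).2‖ := by
  classical
  have hε : (0:ℝ) < (1 / 4) ^ k / 8 := by positivity
  have hε2 : ∀ j : Fin k, (1 / 4 : ℝ) ^ k / 8 ≤ (1 / 4) ^ (j : ℕ) / 8 := by
    intro j
    have : (1 / 4 : ℝ) ^ k ≤ (1 / 4) ^ (j : ℕ) :=
      pow_le_pow_of_le_one (by norm_num) (by norm_num) j.2.le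
    linarith
  obtain ⟨D, h1, h2, h3⟩ := s10_process F c k _ hF hconv hε hε2 f hf k le_rfl
  have hw := s10Inv_le F c k _ hF hε f _ h2
  have hsum : ∑ s ∈ Finset.range k, (1 / 4 : ℝ) ^ s * (D s).length ≤ 6 := by
    have : 0 ≤ (4 / 3) * (1 / 4 : ℝ) ^ k * (D k).length := by positivity
    linarith
  by_contra! hcon
  set U : ℕ → Finset (Fin k) := fun j => Finset.univ.filter
    (fun s => 2 * (1 / 2 : ℝ) ^ j < ‖c (s, !(e s)) f‖) with hU
  have hUc : ∀ j < k, ((U j).card : ℝ) ≤ a * ((D j).length + 1) := by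
    intro j hj
    by_contra! hlt
    have hlt' : a * ((D j).length + 1) < (U j).card := by exact_mod_cast hlt
    have hlen : (D j).length < k := by
      have : (U j).card ≤ k := by simpa using Finset.card_le_univ (U j)
      nlinarith
    obtain ⟨s, hs, hle⟩ := hcon ⟨j, hj⟩ (D j) hlen (by
      intro s
      have := h1 j hj (s, e s)
      rw [h0, zero_sub, norm_neg] at this
      exact this) (U j) hlt'.le
    have hs' : 2 * (1 / 2 : ℝ) ^ j < ‖c (s, !(e s)) f‖ := by
      simpa [hU] using hs
    have h4 := h1 j hj (s, !(e s))
    have h5 := norm_sub_norm_le (c (s, !(e s)) f)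
      (c (s, !(e s)) (s10st F (fun i => ⇑(c i)) k ((1 / 4) ^ k / 8) (D j)).2)
    simp only at hle
    linarith
  have hbound : ∑ s, ‖c (s, !(e s)) f‖ ^ 2 ≤ ∑ s : Fin k, (16 * (1 / 4) ^ k +
      ∑ j ∈ Finset.range k, 16 * (1 / 4 : ℝ) ^ j *
        (if 2 * (1 / 2) ^ j < ‖c (s, !(e s)) f‖ then 1 else 0)) := by
    apply Finset.sum_le_sum
    intro s _
    apply s10_layer _ (norm_nonneg _)
    have := s10_norm_le F c hF hF0 hconv f hf (s, !(e s))
    linarith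
  rw [Finset.sum_add_distrib, Finset.sum_comm] at hbound
  have hA : ∑ s : Fin k, 16 * (1 / 4 : ℝ) ^ k ≤ 16 := by
    rw [Finset.sum_const, Finset.card_univ, Fintype.card_fin, nsmul_eq_mul]
    have h4 : (k : ℝ) ≤ 4 ^ k := by
      exact_mod_cast (Nat.lt_pow_self (by norm_num : 1 < 4)).le
    rw [one_div, inv_pow]
    have : (k : ℝ) * (4 ^ k)⁻¹ ≤ 1 := by
      rw [← div_eq_mul_inv, div_le_one (by positivity)]; exact h4
    linarith
  have hB : ∑ j ∈ Finset.range k, ∑ s : Fin k, 16 * (1 / 4 : ℝ) ^ j *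
        (if 2 * (1 / 2) ^ j < ‖c (s, !(e s)) f‖ then 1 else 0)
      ≤ ∑ j ∈ Finset.range k, (16 * a * ((1 / 4 : ℝ) ^ j * (D j).length) + 16 * a * (1 / 4 : ℝ) ^ j) := by
    apply Finset.sum_le_sum
    intro j hj
    rw [← Finset.mul_sum, Finset.sum_boole]
    have := hUc j (Finset.mem_range.1 hj)
    have h6 := mul_le_mul_of_nonneg_left this (by positivity : (0:ℝ) ≤ 16 * (1 / 4) ^ j)
    calc _ ≤ _ := h6
      _ = _ := by ring
  rw [Finset.sum_add_distrib, ← Finset.mul_sum, ← Finset.mul_sum] at hB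
  have hgeo : ∑ j ∈ Finset.range k, (1 / 4 : ℝ) ^ j ≤ 4 / 3 := by
    rw [geom_sum_eq (by norm_num)]
    have : (0:ℝ) ≤ (1 / 4) ^ k := by positivity
    rw [div_le_iff_of_neg (by norm_num)]
    linarith
  have ha' : (1:ℝ) ≤ a := by exact_mod_cast ha
  nlinarith

lemma s10_union {k : ℕ} (hk : 2 ≤ k) (a : ℕ) (ha : 16 * k ^ 2 ≤ 2 ^ a)
    (c : Fin k × Bool → V →ₗ[ℝ] ℂ)
    (hF : ∀ x, 0 ≤ F x) (hF0 : F 0 = 0)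
    (hconv : ∀ x y, F x ≤ 1 → F y ≤ 1 → ∀ i,
      F ((1 / 2 : ℝ) • (x + y)) + ‖c i x - c i y‖ ^ 2 ≤ (F x + F y) / 2)
    (S : Finset (Fin k → Bool))
    (hS : ∀ e ∈ S, ∃ f, F f ≤ 1 ∧ (∀ s, c (s, e s) f = 0) ∧
      200 * (a : ℝ) < ∑ s, ‖c (s, !(e s)) f‖ ^ 2) :
    (S.card : ℝ) < 2 ^ k / 2 := by
  classical
  have ha1 : 1 ≤ a := by
    by_contra h
    obtain rfl : a = 0 := by omega
    simp at ha
    nlinarith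
  set G : List ((Fin k × Bool) × Fin 4 × Fin k) → V :=
    fun D => (s10st F (fun i => ⇑(c i)) k ((1 / 4) ^ k / 8) D).2 with hG
  set B : Fin k → List ((Fin k × Bool) × Fin 4 × Fin k) → Finset (Fin k → Bool) := fun j D =>
    Finset.univ.filter (fun e => (∀ s, ¬ ((1 / 2) ^ (j : ℕ) < ‖c (s, e s) (G D)‖)) ∧
      ∃ U : Finset (Fin k), a * (D.length + 1) ≤ U.card ∧ ∀ s ∈ U, (1 / 2) ^ (j : ℕ) <
        ‖c (s, !(e s)) (G D)‖) with hB
  have hsub : S ⊆ Finset.univ.biUnion (fun j : Fin k => (Finset.range k).biUnion (fun M =>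
      Finset.univ.biUnion (fun D : Fin M → ((Fin k × Bool) × Fin 4 × Fin k) =>
        B j (List.ofFn D)))) := by
    intro e he
    obtain ⟨f, f1, f2, f3⟩ := hS e he
    obtain ⟨j, D, hD, h1, h2⟩ := s10_det F hk a ha1 c hF hF0 hconv e f f1 f2 f3
    simp only [Finset.mem_biUnion, Finset.mem_univ, true_and, Finset.mem_range]
    refine ⟨j, D.length, hD, D.get, ?_⟩
    rw [List.ofFn_get]
    simp only [hB, Finset.mem_filter, Finset.mem_univ, true_and]
    exact ⟨h1, h2⟩
  have hBc : ∀ j D, ((B j D).card : ℝ) ≤ 2 ^ k / 2 ^ (a * (D.length + 1)) := by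
    intro j D
    rw [le_div_iff₀ (by positivity)]
    have := s10_count (fun s b => (1 / 2) ^ (j : ℕ) < ‖c (s, b) (G D)‖) (a * (D.length + 1)) (B j D)
      (by
        intro e he
        simpa only [hB, Finset.mem_filter, Finset.mem_univ, true_and] using he)
    exact_mod_cast this
  have hk0 : (2:ℝ) ≤ k := by exact_mod_cast hk
  have hR : (16:ℝ) * k ^ 2 ≤ 2 ^ a := by exact_mod_cast ha
  have hterm : ∀ M : ℕ, ((8 * k ^ 2 : ℝ)) ^ M * (2 ^ k / 2 ^ (a * (M + 1))) ≤
      2 ^ k / (16 * k ^ 2) * (1 / 2) ^ M := by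
    intro M
    have h1 : ((8 * k ^ 2 : ℝ)) ^ M ≤ (2 ^ a / 2) ^ M := by
      gcongr; linarith
    calc ((8 * k ^ 2 : ℝ)) ^ M * (2 ^ k / 2 ^ (a * (M + 1)))
        ≤ (2 ^ a / 2) ^ M * (2 ^ k / 2 ^ (a * (M + 1))) := by gcongr
      _ = 2 ^ k / 2 ^ a * (1 / 2) ^ M := by
          rw [mul_add, pow_add, pow_mul, div_pow, mul_one, div_pow, one_pow]
          field_simp
      _ ≤ _ := by gcongr
  have hfin : (S.card : ℝ) ≤ ∑ j : Fin k, ∑ M ∈ Finset.range k,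
      (2:ℝ) ^ k / (16 * (k:ℝ) ^ 2) * (1 / 2) ^ M := by
    have hcs := Finset.card_le_card hsub
    calc (S.card : ℝ) ≤ ((Finset.univ.biUnion (fun j : Fin k => (Finset.range k).biUnion (fun M =>
      Finset.univ.biUnion (fun D : Fin M → ((Fin k × Bool) × Fin 4 × Fin k) =>
        B j (List.ofFn D))))).card : ℝ) := by exact_mod_cast hcs
      _ ≤ ((∑ j : Fin k, ∑ M ∈ Finset.range k, ∑ D : Fin M → ((Fin k × Bool) × Fin 4 × Fin k),
            (B j (List.ofFn D)).card : ℕ) : ℝ) := by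
          norm_cast
          refine Finset.card_biUnion_le.trans (Finset.sum_le_sum fun j _ => ?_)
          refine Finset.card_biUnion_le.trans (Finset.sum_le_sum fun M _ => ?_)
          exact Finset.card_biUnion_le
      _ ≤ _ := by
          push_cast
          refine Finset.sum_le_sum fun j _ => Finset.sum_le_sum fun M _ => ?_
          refine le_trans ?_ (hterm M)
          calc _ ≤ ∑ D : Fin M → ((Fin k × Bool) × Fin 4 × Fin k), (2:ℝ) ^ k / 2 ^ (a * (M + 1)) := by
                refine Finset.sum_le_sum fun D _ => ?_
                have := hBc j (List.ofFn D)
                rwa [List.length_ofFn] at this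
            _ = _ := by
                rw [Finset.sum_const, Finset.card_univ, nsmul_eq_mul]
                congr 1
                simp
                congr 1
                ring
  have hgeo : ∑ j ∈ Finset.range k, (1 / 2 : ℝ) ^ j ≤ 2 := by
    rw [geom_sum_eq (by norm_num)]
    have : (0:ℝ) ≤ (1 / 2) ^ k := by positivity
    rw [div_le_iff_of_neg (by norm_num)]
    linarith
  rw [← Finset.mul_sum, Finset.sum_const, Finset.card_univ, Fintype.card_fin, nsmul_eq_mul] at hfin
  calc (S.card : ℝ) ≤ _ := hfin
    _ ≤ k * (2 ^ k / (16 * k ^ 2) * 2) := by gcongr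
    _ = 2 ^ k / (8 * k) := by field_simp; norm_num
    _ < 2 ^ k / 2 := by
        apply div_lt_div_of_pos_left (by positivity) (by norm_num)
        linarith
end

lemma s10_exp {n k : ℕ} (hn : 0 < n) (hk : 0 < k) (v : Fin n → ℝ) (hv0 : ∀ i, 0 ≤ v i)
    (hv1 : ∀ i, v i ≤ 1) (T : ℝ) (hR : 2 * n / k * (T + 1) < ∑ i, v i)
    (S : Finset (Fin k → Fin n)) (hS : ∀ y ∈ S, ∑ s, v (y s) ≤ T) :
    (S.card : ℝ) ≤ n ^ k / 2 := by
  have hn' : (0:ℝ) < n := by exact_mod_cast hn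
  have hk' : (0:ℝ) < k := by exact_mod_cast hk
  have h1 : (S.card : ℝ) * Real.exp (-T) ≤ ∑ y : Fin k → Fin n, ∏ s, Real.exp (-(v (y s))) := by
    calc (S.card : ℝ) * Real.exp (-T) = ∑ y ∈ S, Real.exp (-T) := by simp
      _ ≤ ∑ y ∈ S, ∏ s, Real.exp (-(v (y s))) := by
          refine Finset.sum_le_sum fun y hy => ?_
          rw [← Real.exp_sum, Finset.sum_neg_distrib]
          exact Real.exp_le_exp.2 (by linarith [hS y hy])
      _ ≤ _ := by
          apply Finset.sum_le_sum_of_subset_of_nonneg (Finset.subset_univ _)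
          intro y _ _
          positivity
  rw [← Fintype.sum_pow (fun i => Real.exp (-(v i)))] at h1
  have h2 : ∑ i, Real.exp (-(v i)) ≤ ∑ i, (1 - v i / 2) := by
    refine Finset.sum_le_sum fun i _ => ?_
    rw [Real.exp_neg]
    have h3 := Real.add_one_le_exp (v i)
    have h4 := hv0 i
    have h5 := hv1 i
    calc (Real.exp (v i))⁻¹ ≤ (v i + 1)⁻¹ := by gcongr
      _ ≤ _ := by
        rw [inv_le_iff_one_le_mul₀ (by linarith)]
        nlinarith
  have h3 : ∑ i, (1 - v i / 2) = n - (∑ i, v i) / 2 := by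
    rw [Finset.sum_sub_distrib, ← Finset.sum_div]; simp
  have h4 : ∑ i, Real.exp (-(v i)) ≤ n * Real.exp (-((T + 1) / k)) := by
    have h5 := Real.add_one_le_exp (-((T + 1) / k))
    have h6 := mul_le_mul_of_nonneg_left h5 hn'.le
    have h7 : 2 * n / k * (T + 1) = 2 * ((n:ℝ) * ((T + 1) / k)) := by ring
    rw [h7] at hR
    linarith
  have h5 : (∑ i, Real.exp (-(v i))) ^ k ≤ n ^ k * Real.exp (-(T + 1)) := by
    calc (∑ i, Real.exp (-(v i))) ^ k ≤ (n * Real.exp (-((T + 1) / k))) ^ k := by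
          gcongr
      _ = _ := by
          rw [mul_pow, ← Real.exp_nat_mul]
          congr 2
          field_simp
  have h6 : (S.card : ℝ) * Real.exp (-T) ≤ (n ^ k * Real.exp (-1)) * Real.exp (-T) := by
    rw [mul_assoc, ← Real.exp_add]
    have : (-1 + -T) = -(T + 1) := by ring
    rw [this]
    linarith
  have h7 := le_of_mul_le_mul_right h6 (Real.exp_pos _)
  have h8 : Real.exp (-1) ≤ 1 / 2 := by
    rw [Real.exp_neg, ← one_div]
    have := Real.add_one_le_exp (1:ℝ)
    apply one_div_le_one_div_of_le <;> linarith
  have h9 : (0:ℝ) < n ^ k := by positivity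
  nlinarith

lemma s10_main {V : Type*} [AddCommGroup V] [Module ℝ V] (F : V → ℝ)
    {n k : ℕ} (hn : 0 < n) (hk : 2 ≤ k) (a : ℕ) (ha : 16 * k ^ 2 ≤ 2 ^ a)
    (c : Fin n → V →ₗ[ℝ] ℂ)
    (hF : ∀ x, 0 ≤ F x) (hF0 : F 0 = 0)
    (hconv : ∀ x y, F x ≤ 1 → F y ≤ 1 → ∀ i,
      F ((1 / 2 : ℝ) • (x + y)) + ‖c i x - c i y‖ ^ 2 ≤ (F x + F y) / 2) :
    ∃ x : Fin k → Fin n, ∀ f, F f ≤ 1 → (∀ s, c (x s) f = 0) →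
      ∑ i, ‖c i f‖ ^ 2 ≤ 2 * n / k * (200 * a + 1) := by
  classical
  by_contra! hcon
  choose f f1 f2 f3 using hcon
  set T : ℝ := 200 * a with hT
  have hnk : (0:ℝ) < n ^ k := by
    have : (0:ℝ) < n := by exact_mod_cast hn
    positivity
  set Bad : (Fin k → Fin n) × (Fin k → Fin n) → Prop := fun q =>
    ∃ f, F f ≤ 1 ∧ (∀ s, c (q.1 s) f = 0) ∧ T < ∑ s, ‖c (q.2 s) f‖ ^ 2 with hBad
  -- lower bound
  have hlow : ∀ x, (n:ℝ) ^ k / 2 ≤ ∑ y, (if Bad (x, y) then (1:ℝ) else 0) := by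
    intro x
    have h1 := s10_exp hn (by omega : 0 < k) (fun i => ‖c i (f x)‖ ^ 2) (fun i => by positivity)
      (fun i => by
        have := s10_norm_le F c hF hF0 hconv (f x) (f1 x) i
        have h0 := norm_nonneg (c i (f x))
        nlinarith) T (f3 x)
      (Finset.univ.filter (fun y => ¬ Bad (x, y))) (by
        intro y hy
        by_contra! hlt
        exact (Finset.mem_filter.1 hy).2 ⟨f x, f1 x, f2 x, hlt⟩)
    have h2 := Finset.card_filter_add_card_filter_not (s := (Finset.univ : Finset (Fin k → Fin n)))
      (fun y => Bad (x, y))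
    rw [Finset.card_univ, Fintype.card_fun, Fintype.card_fin, Fintype.card_fin] at h2
    have h3 : ((Finset.univ.filter (fun y => Bad (x, y))).card : ℝ) +
      ((Finset.univ.filter (fun y => ¬ Bad (x, y))).card : ℝ) = n ^ k := by exact_mod_cast h2
    rw [Finset.sum_boole]
    linarith
  have hlow2 : (n:ℝ) ^ k * (n ^ k / 2) ≤ ∑ q, (if Bad q then (1:ℝ) else 0) := by
    rw [Fintype.sum_prod_type]
    calc (n:ℝ) ^ k * (n ^ k / 2) = ∑ x : Fin k → Fin n, (n:ℝ) ^ k / 2 := by simp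
      _ ≤ _ := Finset.sum_le_sum fun x _ => hlow x
  -- swapping
  let sw : (Fin k → Bool) → (Fin k → Fin n) × (Fin k → Fin n) → (Fin k → Fin n) × (Fin k → Fin n) :=
    fun e q => (fun s => if e s then q.2 s else q.1 s, fun s => if !(e s) then q.2 s else q.1 s)
  have hsw : ∀ e, Function.Involutive (sw e) := by
    intro e q
    ext s
    · by_cases h : e s <;> simp [sw, h]
    · by_cases h : e s <;> simp [sw, h]
  have hsum : ∀ e, ∑ q, (if Bad (sw e q) then (1:ℝ) else 0) = ∑ q, (if Bad q then (1:ℝ) else 0) := by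
    intro e
    exact Equiv.sum_comp ((hsw e).toPerm) (fun q => if Bad q then (1:ℝ) else 0)
  have hup : ∀ q, ∑ e, (if Bad (sw e q) then (1:ℝ) else 0) < 2 ^ k / 2 := by
    intro q
    rw [Finset.sum_boole]
    apply s10_union F hk a ha (fun sb => c (if sb.2 then q.2 sb.1 else q.1 sb.1)) hF hF0
      (fun x y hx hy i => hconv x y hx hy _)
    intro e he
    exact (Finset.mem_filter.1 he).2
  have h1 : ∑ q, ∑ e, (if Bad (sw e q) then (1:ℝ) else 0) <
      ∑ q : (Fin k → Fin n) × (Fin k → Fin n), (2:ℝ) ^ k / 2 := by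
    apply Finset.sum_lt_sum_of_nonempty
    · exact ⟨(fun _ => ⟨0, hn⟩, fun _ => ⟨0, hn⟩), Finset.mem_univ _⟩
    · intro q _; exact hup q
  rw [Finset.sum_comm, Finset.sum_congr rfl (fun e _ => hsum e), Finset.sum_const, Finset.sum_const,
    Finset.card_univ, Finset.card_univ, Fintype.card_prod] at h1
  simp only [Fintype.card_fun, Fintype.card_fin, Fintype.card_bool, nsmul_eq_mul] at h1
  push_cast at h1
  have h2 : (0:ℝ) < 2 ^ k := by positivity
  nlinarith

section
variable {Ω : Type*} [MeasurableSpace Ω] (P : Measure Ω) [IsProbabilityMeasure P]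
  {n : ℕ} (φ : Fin n → Ω → ℂ) (L : ℝ)

lemma s10_memLp (hm : ∀ j, AEStronglyMeasurable (φ j) P) (hb : ∀ j, ∀ᵐ ω ∂P, ‖φ j ω‖ ≤ L)
    (x : Fin n → ℂ) (q : ENNReal) : MemLp (fun ω => ∑ i, x i * φ i ω) q P := by
  apply MemLp.of_bound (C := ∑ i, ‖x i‖ * L)
  · apply Finset.aestronglyMeasurable_fun_sum
    intro i _
    exact (hm i).const_mul (x i)
  · filter_upwards [ae_all_iff.2 hb] with ω hω
    refine (norm_sum_le _ _).trans (Finset.sum_le_sum fun i _ => ?_)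
    rw [norm_mul]
    gcongr
    exact hω i

lemma s10_intp (hm : ∀ j, AEStronglyMeasurable (φ j) P) (hb : ∀ j, ∀ᵐ ω ∂P, ‖φ j ω‖ ≤ L)
    {p : ℝ} (hp : 0 < p) (x : Fin n → ℂ) :
    Integrable (fun ω => ‖∑ i, x i * φ i ω‖ ^ p) P := by
  have h := (s10_memLp P φ L hm hb x (ENNReal.ofReal p)).integrable_norm_rpow
    (by simpa using hp) ENNReal.ofReal_ne_top
  rwa [ENNReal.toReal_ofReal hp.le] at h

lemma s10_cc (hm : ∀ j, AEStronglyMeasurable (φ j) P) (hb : ∀ j, ∀ᵐ ω ∂P, ‖φ j ω‖ ≤ L)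
    (i j : Fin n) : Integrable (fun ω => (starRingEnd ℂ) (φ i ω) * φ j ω) P := by
  apply Integrable.of_bound (C := L * L)
  · exact (Complex.continuous_conj.comp_aestronglyMeasurable (hm i)).mul (hm j)
  · filter_upwards [hb i, hb j] with ω h1 h2
    rw [norm_mul, RCLike.norm_conj]
    have := norm_nonneg (φ i ω)
    have := norm_nonneg (φ j ω)
    gcongr
    linarith

lemma s10_coef (hm : ∀ j, AEStronglyMeasurable (φ j) P)
    (ho : ∀ i j, (∫ ω, (starRingEnd ℂ) (φ i ω) * φ j ω ∂P) = if i = j then 1 else 0)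
    (hb : ∀ j, ∀ᵐ ω ∂P, ‖φ j ω‖ ≤ L) (x : Fin n → ℂ) (j : Fin n) :
    ∫ ω, (starRingEnd ℂ) (φ j ω) * ∑ i, x i * φ i ω ∂P = x j := by
  have e : ∀ ω, (starRingEnd ℂ) (φ j ω) * ∑ i, x i * φ i ω =
      ∑ i, x i * ((starRingEnd ℂ) (φ j ω) * φ i ω) := by
    intro ω
    rw [Finset.mul_sum]
    exact Finset.sum_congr rfl fun i _ => by ring
  simp_rw [e]
  rw [integral_finsetSum _ (fun i _ => (s10_cc P φ L hm hb j i).const_mul _)]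
  simp_rw [integral_const_mul, ho]
  simp

lemma s10_coef_le (hm : ∀ j, AEStronglyMeasurable (φ j) P)
    (ho : ∀ i j, (∫ ω, (starRingEnd ℂ) (φ i ω) * φ j ω ∂P) = if i = j then 1 else 0)
    (hb : ∀ j, ∀ᵐ ω ∂P, ‖φ j ω‖ ≤ L) (x : Fin n → ℂ) (j : Fin n) :
    ‖x j‖ ≤ L * ∫ ω, ‖∑ i, x i * φ i ω‖ ∂P := by
  have hi : Integrable (fun ω => ∑ i, x i * φ i ω) P :=
    memLp_one_iff_integrable.1 (s10_memLp P φ L hm hb x 1)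
  rw [← integral_const_mul]
  nth_rewrite 1 [← s10_coef P φ L hm ho hb x j]
  apply norm_integral_le_of_norm_le (hi.norm.const_mul L)
  filter_upwards [hb j] with ω h
  rw [norm_mul, RCLike.norm_conj]
  gcongr

lemma s10_l2 (hm : ∀ j, AEStronglyMeasurable (φ j) P)
    (ho : ∀ i j, (∫ ω, (starRingEnd ℂ) (φ i ω) * φ j ω ∂P) = if i = j then 1 else 0)
    (hb : ∀ j, ∀ᵐ ω ∂P, ‖φ j ω‖ ≤ L) (x : Fin n → ℂ) :
    ∫ ω, ‖∑ i, x i * φ i ω‖ ^ 2 ∂P = ∑ i, ‖x i‖ ^ 2 := by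
  have h : (((∫ ω, ‖∑ i, x i * φ i ω‖ ^ 2 ∂P : ℝ)) : ℂ) = ((∑ i, ‖x i‖ ^ 2 : ℝ) : ℂ) := by
    rw [← integral_complex_ofReal]
    have e : ∀ ω, (((‖∑ i, x i * φ i ω‖ ^ 2 : ℝ)) : ℂ) =
        ∑ j, (starRingEnd ℂ) (x j) * ((starRingEnd ℂ) (φ j ω) * ∑ i, x i * φ i ω) := by
      intro ω
      push_cast
      rw [← Complex.conj_mul', map_sum, Finset.sum_mul]
      refine Finset.sum_congr rfl fun j _ => ?_
      rw [map_mul, mul_assoc]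
    simp_rw [e]
    rw [integral_finsetSum]
    · simp_rw [integral_const_mul, s10_coef P φ L hm ho hb]
      push_cast
      exact Finset.sum_congr rfl fun j _ => Complex.conj_mul' _
    · intro j _
      apply Integrable.const_mul
      have e : ∀ ω, (starRingEnd ℂ) (φ j ω) * ∑ i, x i * φ i ω =
          ∑ i, x i * ((starRingEnd ℂ) (φ j ω) * φ i ω) := by
        intro ω
        rw [Finset.mul_sum]
        exact Finset.sum_congr rfl fun i _ => by ring
      simp_rw [e]
      exact integrable_finsetSum _ (fun i _ => (s10_cc P φ L hm hb j i).const_mul _)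
  exact_mod_cast h

lemma s10_Lpos (ho : ∀ i j, (∫ ω, (starRingEnd ℂ) (φ i ω) * φ j ω ∂P) = if i = j then 1 else 0)
    (hb : ∀ j, ∀ᵐ ω ∂P, ‖φ j ω‖ ≤ L) (j : Fin n) : 0 < L := by
  by_contra! hL
  have h := ho j j
  rw [if_pos rfl] at h
  have : ∫ ω, (starRingEnd ℂ) (φ j ω) * φ j ω ∂P = 0 := by
    apply integral_eq_zero_of_ae
    filter_upwards [hb j] with ω h
    have : φ j ω = 0 := norm_eq_zero.1 (le_antisymm (h.trans hL) (norm_nonneg _))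
    simp [this]
  rw [this] at h
  exact zero_ne_one h

lemma s10_conv (hm : ∀ j, AEStronglyMeasurable (φ j) P)
    (ho : ∀ i j, (∫ ω, (starRingEnd ℂ) (φ i ω) * φ j ω ∂P) = if i = j then 1 else 0)
    (hb : ∀ j, ∀ᵐ ω ∂P, ‖φ j ω‖ ≤ L) {p : ℝ} (hp : 1 < p) (hp2 : p < 2) (x y : Fin n → ℂ)
    (hx : ∫ ω, ‖∑ i, x i * φ i ω‖ ^ p ∂P ≤ 1) (hy : ∫ ω, ‖∑ i, y i * φ i ω‖ ^ p ∂P ≤ 1)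
    (j : Fin n) :
    ∫ ω, ‖∑ i, ((1 / 2 : ℝ) • (x + y)) i * φ i ω‖ ^ p ∂P
        + (p - 1) / (48 * L ^ 2) * ‖x j - y j‖ ^ 2 ≤
      (∫ ω, ‖∑ i, x i * φ i ω‖ ^ p ∂P + ∫ ω, ‖∑ i, y i * φ i ω‖ ^ p ∂P) / 2 := by
  have hL := s10_Lpos P φ L ho hb j
  have hp0 : 0 < p := by linarith
  have ix := s10_intp P φ L hm hb hp0 x
  have iy := s10_intp P φ L hm hb hp0 y
  have iz := s10_intp P φ L hm hb hp0 ((1 / 2 : ℝ) • (x + y))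
  have id : Integrable (fun ω => ‖∑ i, (x - y) i * φ i ω‖) P :=
    (memLp_one_iff_integrable.1 (s10_memLp P φ L hm hb (x - y) 1)).norm
  set d := ∫ ω, ‖∑ i, (x - y) i * φ i ω‖ ∂P with hd
  have hc := s10_coef_le P φ L hm ho hb (x - y) j
  rw [← hd, Pi.sub_apply] at hc
  have hpw : ∀ ω, ‖∑ i, ((1 / 2 : ℝ) • (x + y)) i * φ i ω‖ ^ p +
      ((p - 1) / 16 * (2 * (d / 3)) * ‖∑ i, (x - y) i * φ i ω‖ -
        (p - 1) / 16 * (d / 3) ^ 2 * (1 + ‖∑ i, x i * φ i ω‖ ^ p + ‖∑ i, y i * φ i ω‖ ^ p)) ≤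
      (‖∑ i, x i * φ i ω‖ ^ p + ‖∑ i, y i * φ i ω‖ ^ p) / 2 := by
    intro ω
    have h := s10_pw hp hp2 (∑ i, x i * φ i ω) (∑ i, y i * φ i ω) (d / 3)
    have e1 : ∑ i, ((1 / 2 : ℝ) • (x + y)) i * φ i ω =
        (∑ i, x i * φ i ω + ∑ i, y i * φ i ω) / 2 := by
      rw [← Finset.sum_add_distrib, Finset.sum_div]
      refine Finset.sum_congr rfl fun i _ => ?_
      rw [Pi.smul_apply, Pi.add_apply, Complex.real_smul]
      push_cast
      ring
    have e2 : ∑ i, (x - y) i * φ i ω = ∑ i, x i * φ i ω - ∑ i, y i * φ i ω := by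
      rw [← Finset.sum_sub_distrib]
      refine Finset.sum_congr rfl fun i _ => ?_
      rw [Pi.sub_apply]; ring
    rw [e1, e2]
    linarith
  have i1 : Integrable (fun ω => (1:ℝ) + ‖∑ i, x i * φ i ω‖ ^ p + ‖∑ i, y i * φ i ω‖ ^ p) P :=
    ((integrable_const _).add ix).add iy
  have i0 : Integrable (fun ω => (1:ℝ) + ‖∑ i, x i * φ i ω‖ ^ p) P := (integrable_const _).add ix
  have i2 : Integrable (fun ω => (p - 1) / 16 * (2 * (d / 3)) * ‖∑ i, (x - y) i * φ i ω‖ -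
      (p - 1) / 16 * (d / 3) ^ 2 *
        (1 + ‖∑ i, x i * φ i ω‖ ^ p + ‖∑ i, y i * φ i ω‖ ^ p)) P :=
    (id.const_mul _).sub (i1.const_mul _)
  have i3 : Integrable (fun ω => ‖∑ i, ((1 / 2 : ℝ) • (x + y)) i * φ i ω‖ ^ p +
      ((p - 1) / 16 * (2 * (d / 3)) * ‖∑ i, (x - y) i * φ i ω‖ -
        (p - 1) / 16 * (d / 3) ^ 2 *
          (1 + ‖∑ i, x i * φ i ω‖ ^ p + ‖∑ i, y i * φ i ω‖ ^ p))) P := iz.add i2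
  have i4 : Integrable (fun ω => (‖∑ i, x i * φ i ω‖ ^ p + ‖∑ i, y i * φ i ω‖ ^ p) / 2) P :=
    (ix.add iy).div_const 2
  have hint := integral_mono i3 i4 hpw
  rw [integral_add iz i2, integral_sub (id.const_mul _) (i1.const_mul _),
    integral_const_mul, integral_const_mul, integral_div, integral_add ix iy,
    integral_add i0 iy, integral_add (integrable_const _) ix, ← hd] at hint
  simp only [integral_const, probReal_univ, one_smul] at hint
  set X := ∫ ω, ‖∑ i, x i * φ i ω‖ ^ p ∂P
  set Y := ∫ ω, ‖∑ i, y i * φ i ω‖ ^ p ∂P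
  have hq : 0 ≤ (p - 1) / 16 * (d / 3) ^ 2 := by
    have : 0 ≤ p - 1 := by linarith
    positivity
  have h1 : (p - 1) / 16 * (d / 3) ^ 2 * (1 + X + Y) ≤ (p - 1) / 16 * (d / 3) ^ 2 * 3 :=
    mul_le_mul_of_nonneg_left (by linarith) hq
  have h2 : (p - 1) / (48 * L ^ 2) * ‖x j - y j‖ ^ 2 ≤ (p - 1) / 48 * d ^ 2 := by
    have h3 : ‖x j - y j‖ ^ 2 ≤ (L * d) ^ 2 := by gcongr
    calc (p - 1) / (48 * L ^ 2) * ‖x j - y j‖ ^ 2 ≤ (p - 1) / (48 * L ^ 2) * (L * d) ^ 2 := by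
          apply mul_le_mul_of_nonneg_left h3
          apply div_nonneg (by linarith) (by positivity)
      _ = _ := by field_simp
  have h5 : (p - 1) / 16 * (2 * (d / 3)) * d - (p - 1) / 16 * (d / 3) ^ 2 * 3 =
      (p - 1) / 48 * d ^ 2 := by ring
  linarith
end

lemma s10_a (k : ℕ) (hk : 2 ≤ k) : ∃ a : ℕ, 16 * k ^ 2 ≤ 2 ^ a ∧ (a : ℝ) ≤ 14 * Real.log k := by
  refine ⟨Nat.clog 2 (16 * k ^ 2), Nat.le_pow_clog (by norm_num) _, ?_⟩
  set a := Nat.clog 2 (16 * k ^ 2) with ha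
  have hk2 : (2:ℝ) ≤ k := by exact_mod_cast hk
  have h1 : 2 ^ (a - 1) < 16 * k ^ 2 := Nat.pow_pred_clog_lt_self (by norm_num) (by nlinarith)
  have ha1 : 1 ≤ a := Nat.clog_pos (by norm_num) (by nlinarith)
  have h2 : (2:ℝ) ^ a ≤ 32 * k ^ 2 := by
    have : 2 ^ a = 2 * 2 ^ (a - 1) := by rw [← pow_succ']; congr 1; omega
    have h3 : 2 ^ a ≤ 32 * k ^ 2 := by omega
    exact_mod_cast h3
  have h3 := Real.log_le_log (by positivity) h2
  rw [Real.log_pow, Real.log_mul (by norm_num) (by positivity), Real.log_pow] at h3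
  have h4 : Real.log 32 = 5 * Real.log 2 := by
    rw [show (32:ℝ) = 2 ^ 5 by norm_num, Real.log_pow]; norm_num
  have h5 := Real.log_le_log (by norm_num) hk2
  have h6 := Real.log_two_gt_d9
  rw [h4] at h3
  push_cast at h3
  nlinarith

theorem stmt10 :
    ∃ C : ℝ, 0 < C ∧
      ∀ (Ω : Type*) [MeasurableSpace Ω] (P : Measure Ω) [IsProbabilityMeasure P]
        (n : ℕ) (φ : Fin n → Ω → ℂ) (L : ℝ),
        (∀ j, AEStronglyMeasurable (φ j) P) →
        (∀ i j, (∫ ω, (starRingEnd ℂ) (φ i ω) * φ j ω ∂P) = if i = j then 1 else 0) →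
        (∀ j, ∀ᵐ ω ∂P, ‖φ j ω‖ ≤ L) →
        ∀ p : ℝ, 1 < p → p < 2 →
        ∀ k : ℕ, 2 ≤ k → k < n →
        ∃ I : Finset (Fin n), n - k ≤ I.card ∧
          ∀ a : Fin n → ℂ,
            eLpNorm (fun ω => ∑ i ∈ I, a i * φ i ω) 2 P ≤
              ENNReal.ofReal
                  (C / (p - 1) ^ ((5 : ℝ) / 2) * L * Real.sqrt ((n : ℝ) / k) *
                    Real.sqrt (Real.log k)) *
                eLpNorm (fun ω => ∑ i ∈ I, a i * φ i ω) (ENNReal.ofReal p) P := by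
  refine ⟨1000, by norm_num, ?_⟩
  intro Ω _ P _ n φ L hm ho hb p hp hp2 k hk hkn
  classical
  have hn : 0 < n := by omega
  have hL := s10_Lpos P φ L ho hb ⟨0, hn⟩
  have hp0 : 0 < p := by linarith
  have hp1 : 0 < p - 1 := by linarith
  obtain ⟨A, hA1, hA2⟩ := s10_a k hk
  set κ := (p - 1) / (48 * L ^ 2) with hκ
  have hκ0 : 0 < κ := by positivity
  set F : (Fin n → ℂ) → ℝ := fun x => ∫ ω, ‖∑ i, x i * φ i ω‖ ^ p ∂P with hFdef
  have hF : ∀ x, 0 ≤ F x := fun x => integral_nonneg fun ω => by positivity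
  have hF0 : F 0 = 0 := by simp [hFdef, Real.zero_rpow hp0.ne']
  have hcv : ∀ x y, F x ≤ 1 → F y ≤ 1 → ∀ i,
      F ((1 / 2 : ℝ) • (x + y)) + κ * ‖x i - y i‖ ^ 2 ≤ (F x + F y) / 2 :=
    fun x y hx hy i => s10_conv P φ L hm ho hb hp hp2 x y hx hy i
  set c : Fin n → (Fin n → ℂ) →ₗ[ℝ] ℂ := fun i => (Real.sqrt κ) • LinearMap.proj i with hcdef
  have hcn : ∀ i x, ‖c i x‖ ^ 2 = κ * ‖x i‖ ^ 2 := by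
    intro i x
    simp only [hcdef, LinearMap.smul_apply, LinearMap.proj_apply, norm_smul, mul_pow]
    rw [Real.norm_of_nonneg (Real.sqrt_nonneg _), Real.sq_sqrt hκ0.le]
  have hconv : ∀ x y, F x ≤ 1 → F y ≤ 1 → ∀ i,
      F ((1 / 2 : ℝ) • (x + y)) + ‖c i x - c i y‖ ^ 2 ≤ (F x + F y) / 2 := by
    intro x y hx hy i
    rw [← map_sub, hcn]
    exact hcv x y hx hy i
  obtain ⟨X, hX⟩ := s10_main F hn hk A hA1 c hF hF0 hconv
  refine ⟨(Finset.univ.image X)ᶜ, ?_, ?_⟩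
  · rw [Finset.card_compl, Fintype.card_fin]
    have : (Finset.univ.image X).card ≤ k := by
      simpa using Finset.card_image_le (s := Finset.univ) (f := X)
    omega
  intro a
  set x : Fin n → ℂ := fun i => if i ∈ (Finset.univ.image X)ᶜ then a i else 0 with hx
  have hfx : (fun ω => ∑ i ∈ (Finset.univ.image X)ᶜ, a i * φ i ω) = fun ω => ∑ i, x i * φ i ω := by
    funext ω
    simp only [hx, ite_mul, zero_mul]
    rw [Finset.sum_ite_mem, Finset.univ_inter]
  rw [hfx]
  have hX0 : ∀ s, x (X s) = 0 := by
    intro s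
    simp [hx]
  set M := 1000 / (p - 1) ^ ((5 : ℝ) / 2) * L * Real.sqrt ((n : ℝ) / k) *
                    Real.sqrt (Real.log k) with hM
  have hlog : 0 < Real.log k := Real.log_pos (by exact_mod_cast (by omega : 1 < k))
  have hM0 : 0 ≤ M := by positivity
  have hkR : (2:ℝ) ≤ k := by exact_mod_cast hk
  have hM2 : M ^ 2 = 1000000 / (p - 1) ^ 5 * L ^ 2 * (n / k) * Real.log k := by
    have e : ((p - 1) ^ ((5 : ℝ) / 2)) ^ 2 = (p - 1) ^ 5 := by
      rw [← Real.rpow_natCast, ← Real.rpow_mul hp1.le, ← Real.rpow_natCast]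
      norm_num
    rw [hM, mul_pow, mul_pow, mul_pow, div_pow, e, Real.sq_sqrt (by positivity), Real.sq_sqrt hlog.le]
    norm_num
  -- the bound for normalized vectors
  have hnorm : ∀ y, F y ≤ 1 → (∀ s, y (X s) = 0) → ∑ i, ‖y i‖ ^ 2 ≤ M ^ 2 := by
    intro y hy hy0
    have h := hX y hy (fun s => by simp [hcdef, hy0 s])
    simp_rw [hcn] at h
    rw [← Finset.mul_sum] at h
    have hlog2 : 1 / 2 ≤ Real.log k := by
      have := Real.log_le_log (by norm_num) hkR
      have := Real.log_two_gt_d9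
      linarith
    have h1 : (2 * n / k * (200 * A + 1) : ℝ) ≤ 2 * n / k * (2802 * Real.log k) := by
      apply mul_le_mul_of_nonneg_left _ (by positivity)
      linarith
    have h2 : ∑ i, ‖y i‖ ^ 2 ≤ 1 / κ * (2 * n / k * (2802 * Real.log k)) := by
      rw [one_div, ← div_eq_inv_mul, le_div_iff₀ hκ0]
      linarith
    refine h2.trans ?_
    rw [hM2, hκ]
    have h3 : (p - 1) ^ 5 ≤ p - 1 := by
      have := pow_le_pow_of_le_one hp1.le (by linarith : p - 1 ≤ 1) (by norm_num : 1 ≤ 5)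
      simpa using this
    have h4 : 1 / (p - 1) ≤ 1 / (p - 1) ^ 5 := one_div_le_one_div_of_le (by positivity) h3
    calc 1 / ((p - 1) / (48 * L ^ 2)) * (2 * n / k * (2802 * Real.log k))
        = 268992 * (1 / (p - 1)) * L ^ 2 * (n / k) * Real.log k := by field_simp; norm_num
      _ ≤ 1000000 * (1 / (p - 1) ^ 5) * L ^ 2 * (n / k) * Real.log k := by
          gcongr; norm_num
      _ = _ := by ring
  -- scaling
  have hscale : ∑ i, ‖x i‖ ^ 2 ≤ M ^ 2 * ((F x) ^ p⁻¹) ^ 2 := by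
    rcases (hF x).eq_or_lt with h0 | h0
    · have hz : ∀ i, ‖x i‖ ^ 2 = 0 := by
        intro i
        have h1 := hcv x 0 (by rw [← h0]; norm_num) (by rw [hF0]; norm_num) i
        have h2 := hF ((1 / 2 : ℝ) • (x + 0))
        rw [← h0, hF0, Pi.zero_apply, sub_zero] at h1
        have h3 : 0 ≤ κ * ‖x i‖ ^ 2 := by positivity
        have h4 : κ * ‖x i‖ ^ 2 = 0 := by linarith
        exact (mul_eq_zero.1 h4).resolve_left hκ0.ne'
      simp_rw [hz]
      simp only [Finset.sum_const_zero]
      positivity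
    · set r := (F x) ^ p⁻¹ with hr
      have hr0 : 0 < r := Real.rpow_pos_of_pos h0 _
      have hrp : r ^ p = F x := by
        rw [hr, ← Real.rpow_mul h0.le, inv_mul_cancel₀ hp0.ne', Real.rpow_one]
      have hFy : F (fun i => (r⁻¹ : ℂ) * x i) = 1 := by
        have e : ∀ ω, ‖∑ i, ((r⁻¹ : ℂ) * x i) * φ i ω‖ ^ p = (r ^ p)⁻¹ * ‖∑ i, x i * φ i ω‖ ^ p := by
          intro ω
          simp_rw [mul_assoc]
          rw [← Finset.mul_sum, norm_mul, Real.mul_rpow (norm_nonneg _) (norm_nonneg _), norm_inv,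
            Complex.norm_real, Real.norm_of_nonneg hr0.le, Real.inv_rpow hr0.le]
        simp only [hFdef]
        simp_rw [e]
        rw [integral_const_mul, hrp]
        exact inv_mul_cancel₀ h0.ne'
      have h1 := hnorm _ hFy.le (fun s => by simp [hX0 s])
      simp_rw [norm_mul, mul_pow] at h1
      rw [← Finset.mul_sum, norm_inv, Complex.norm_real, Real.norm_of_nonneg hr0.le, inv_pow,
        ← div_eq_inv_mul, div_le_iff₀ (by positivity)] at h1
      exact h1
  rw [(s10_memLp P φ L hm hb x 2).eLpNorm_eq_integral_rpow_norm (by norm_num) (by norm_num),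
    (s10_memLp P φ L hm hb x (ENNReal.ofReal p)).eLpNorm_eq_integral_rpow_norm
      (by simpa using hp0) ENNReal.ofReal_ne_top, ENNReal.toReal_ofReal hp0.le,
    ← ENNReal.ofReal_mul hM0]
  apply ENNReal.ofReal_le_ofReal
  have e2 : ∫ ω, ‖∑ i, x i * φ i ω‖ ^ (2 : ENNReal).toReal ∂P = ∑ i, ‖x i‖ ^ 2 := by
    rw [← s10_l2 P φ L hm ho hb x]
    simp
  rw [e2]
  have e3 : (∑ i, ‖x i‖ ^ 2) ^ ((2 : ENNReal).toReal)⁻¹ = Real.sqrt (∑ i, ‖x i‖ ^ 2) := by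
    rw [Real.sqrt_eq_rpow]; simp
  rw [e3]
  apply Real.sqrt_le_iff.2
  refine ⟨mul_nonneg hM0 (Real.rpow_nonneg (hF x) _), ?_⟩
  rw [mul_pow]
  exact hscale
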